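/- Let M_1, M_2, M_3 be the 3×3 integer matrices (indexed by {0,1,2}) where M_k has a single entry equal to 1 at position (k−1,k−1) and all other entries 0 (i.e., M_1 has 1 at (0,0), M_2 at (1,1), M_3 at (2,2)). Then: each M_k is a permuted a-Monge matrix; for every two of these matrices there exists a permutation of {0,1,2} that is an a-Monge permutation for both; but there is no permutation of {0,1,2} that is simultaneously an a-Monge permutation for all three. (Hence the bound |U'| ≤ 3 in the reduction of a family of matrices with no common a-Monge permutation to a subfamily of size at most 3 is tight.) -/

import Mathlib

/-- A square matrix indexed by a linearly ordered type is a-Monge if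
`M i k + M j l ≥ M i l + M j k` whenever `i < j` and `k < l`. -/
def AMonge {ι : Type*} [LinearOrder ι] (M : ι → ι → ℤ) : Prop :=
  ∀ i j k l : ι, i < j → k < l → M i l + M j k ≤ M i k + M j l

/-- A matrix is a permuted a-Monge matrix if some permutation of its index set,
applied simultaneously to rows and columns, makes it a-Monge. -/
def PermAMonge {ι : Type*} [LinearOrder ι] (M : ι → ι → ℤ) : Prop :=
  ∃ π : Equiv.Perm ι, AMonge (fun i j => M (π i) (π j))

/-- `diagUnit k` is the 3×3 matrix whose only nonzero entry is a `1` at `(k,k)`. -/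
def diagUnit (k : Fin 3) : Fin 3 → Fin 3 → ℤ :=
  fun i j => if i = k ∧ j = k then 1 else 0

open Matrix

theorem encard_pair_le_two {α : Type*} (a b : α) : ({a, b} : Set α).encard ≤ 2 :=
  (Set.encard_insert_le {b} a).trans_eq (by rw [Set.encard_singleton, one_add_one_eq_two])

theorem exists_perm_subset_pair_bot_top {α : Type*} [PartialOrder α] [BoundedOrder α]
    {s : Set α} (hs : s.encard ≤ 2) :
    ∃ π : Equiv.Perm α, s ⊆ {π ⊥, π ⊤} := by
  cases subsingleton_or_nontrivial α
  · exact ⟨1, fun k _ => .inl (Subsingleton.elim _ _)⟩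
  · have two_le : 2 ≤ (Set.univ : Set α).encard :=
      Set.encard_pair (bot_ne_top (α := α)) ▸ Set.encard_le_encard (Set.subset_univ _)
    obtain ⟨t, hst, -, ht⟩ := Set.exists_superset_subset_encard_eq s.subset_univ hs two_le
    obtain ⟨k, l, hkl, rfl⟩ := Set.encard_eq_two.mp ht
    obtain ⟨π, rfl, rfl⟩ := MulAction.is_two_pretransitive_iff.mp
      (Equiv.Perm.isMultiplyPretransitive α 2) (bot_ne_top (α := α)) hkl
    exact ⟨π, hst⟩

section Single

variable {ι : Type*} [LinearOrder ι] {c : ℤ}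

-- The two conjuncts rule out the entry `c` at the upper right, respectively at the lower left
-- corner of a `2 × 2` minor.
theorem aMonge_single_iff {p q : ι} (hc : 0 < c) :
    AMonge (single p q c) ↔ (IsMax p ∨ IsMin q) ∧ (IsMin p ∨ IsMax q) := by
  constructor
  · intro h
    constructor
    · by_contra! ⟨hp, hq⟩
      obtain ⟨j, hpj⟩ := not_isMax_iff.mp hp
      obtain ⟨k, hkq⟩ := not_isMin_iff.mp hq
      have c_nonpos := h p j k q hpj hkq
      simp only [single_apply_same, single_apply_of_row_ne hpj.ne,
        single_apply_of_col_ne _ _ hkq.ne', add_zero] at c_nonpos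
      exact c_nonpos.not_gt hc
    · by_contra! ⟨hp, hq⟩
      obtain ⟨i, hip⟩ := not_isMin_iff.mp hp
      obtain ⟨l, hql⟩ := not_isMax_iff.mp hq
      have c_nonpos := h i p q l hip hql
      simp only [single_apply_same, single_apply_of_row_ne hip.ne',
        single_apply_of_col_ne _ _ hql.ne, zero_add] at c_nonpos
      exact c_nonpos.not_gt hc
  · rintro ⟨hne, hsw⟩ i j k l hij hkl
    have upper_right : single p q c i l = 0 := by
      refine single_apply_of_ne _ _ _ _ _ ?_
      rintro ⟨rfl, rfl⟩
      exact hne.elim (·.not_lt hij) (·.not_lt hkl)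
    have lower_left : single p q c j k = 0 := by
      refine single_apply_of_ne _ _ _ _ _ ?_
      rintro ⟨rfl, rfl⟩
      exact hsw.elim (·.not_lt hij) (·.not_lt hkl)
    have nonneg (a b : ι) : 0 ≤ single p q c a b := by
      rw [single_apply]
      split_ifs <;> lia
    rw [upper_right, lower_left, add_zero]
    exact add_nonneg (nonneg i k) (nonneg j l)

theorem aMonge_single_self_perm_iff (hc : 0 < c) (π : Equiv.Perm ι) (k : ι) :
    AMonge (fun i j => single k k c (π i) (π j)) ↔
      IsMin (π.symm k) ∨ IsMax (π.symm k) := by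
  have reindex : (fun i j => single k k c (π i) (π j)) = single (π.symm k) (π.symm k) c :=
    submatrix_single_equiv π π k k c
  rw [reindex, aMonge_single_iff hc, or_comm, and_self]

theorem tightness_of_three_matrices_bound_general [BoundedOrder ι] (hc : 0 < c) (s : Set ι) :
    (∃ π : Equiv.Perm ι, ∀ k ∈ s, AMonge (fun i j => single k k c (π i) (π j))) ↔
      s.encard ≤ 2 := by
  simp only [aMonge_single_self_perm_iff hc, isMin_iff_eq_bot, isMax_iff_eq_top,
    Equiv.symm_apply_eq]
  refine ⟨fun ⟨π, hπ⟩ => ?_, exists_perm_subset_pair_bot_top⟩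
  exact (Set.encard_le_encard hπ).trans (encard_pair_le_two _ _)

end Single

theorem diagUnit_eq_single (k : Fin 3) : diagUnit k = single k k 1 := by
  ext i j
  simp only [diagUnit, single_apply, eq_comm]

/-- Each of the three matrices `diagUnit 0`, `diagUnit 1`,
`diagUnit 2` is permuted a-Monge; any two of them admit a common a-Monge
permutation; but no permutation of `{0,1,2}` is an a-Monge permutation for all
three simultaneously.  Hence the bound `|U'| ≤ 3` is tight. -/
theorem tightness_of_three_matrices_bound :
    (∀ k : Fin 3, PermAMonge (diagUnit k)) ∧
    (∀ k l : Fin 3, ∃ π : Equiv.Perm (Fin 3),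
        AMonge (fun a b => diagUnit k (π a) (π b)) ∧
        AMonge (fun a b => diagUnit l (π a) (π b))) ∧
    ¬ ∃ π : Equiv.Perm (Fin 3),
        ∀ k : Fin 3, AMonge (fun a b => diagUnit k (π a) (π b)) := by
  simp only [PermAMonge, diagUnit_eq_single]
  have common_of_pair (k l : Fin 3) : ∃ π : Equiv.Perm (Fin 3),
      AMonge (fun a b => single k k 1 (π a) (π b)) ∧
      AMonge (fun a b => single l l 1 (π a) (π b)) := by
    simpa using (tightness_of_three_matrices_bound_general one_pos {k, l}).mpr
      (encard_pair_le_two k l)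
  refine ⟨fun k => (common_of_pair k k).imp fun _ h => h.1, common_of_pair, ?_⟩
  rintro ⟨π, hπ⟩
  have card_le_two : (Set.univ : Set (Fin 3)).encard ≤ 2 :=
    (tightness_of_three_matrices_bound_general one_pos _).mp ⟨π, fun k _ => hπ k⟩
  norm_num at card_le_two
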